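/- Finiteness of the representing machine: let S = (Rules_1, Rules_2, Initials) be a system of propositional executable logic in which Rules_1 and Rules_2 are finite sets of action rules, and let I = (s1(0), ∅, p(0), ∅, s2(0)) ∈ Initials have finite components s1(0), p(0), s2(0). Then every literal occurring in s_x(n) or p(n) for any execution e generated by S with e(0) = I and any n ≤ t lies in the finite set consisting of the literals of s1(0) ∪ p(0) ∪ s2(0) together with the literals α such that ⊕α or ⊞α occurs in the head of some rule in Rules_1 ∪ Rules_2; consequently the set of tuples {(y, s1(n), p(n), s2(n)) | e generated by S, e(0) = I, n ≤ t} (the state set of the machine representing S for I) is finite. -/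

import Mathlib

universe u

/-- A literal over a set of atoms: an atom or a negated atom. -/
inductive Lit (At : Type u) : Type u
  | pos (a : At)
  | neg (a : At)

/-- Propositional formulae over the atoms (whose literals are the
atoms and negated atoms), built with negation, conjunction and disjunction. -/
inductive PForm (At : Type u) : Type u
  | atom (a : At)
  | not (φ : PForm At)
  | and (φ ψ : PForm At)
  | or (φ ψ : PForm At)

/-- Satisfaction of a literal by a (classical) valuation. -/
def Lit.sat {At : Type u} (v : At → Prop) : Lit At → Prop
  | .pos a => v a
  | .neg a => ¬ v a

/-- Classical satisfaction of a propositional formula by a valuation. -/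
def PForm.sat {At : Type u} (v : At → Prop) : PForm At → Prop
  | .atom a => v a
  | .not φ => ¬ φ.sat v
  | .and φ ψ => φ.sat v ∧ ψ.sat v
  | .or φ ψ => φ.sat v ∨ ψ.sat v

/-- Classical propositional entailment of a formula from a set of literals. -/
def Entails {At : Type u} (Γ : Set (Lit At)) (φ : PForm At) : Prop :=
  ∀ v : At → Prop, (∀ l ∈ Γ, l.sat v) → φ.sat v

/-- Action units: ⊕α (add to own next private state), ⊖α (delete from own next
private state), ⊞α (add to next public state), ⊟α (delete from next public state). -/
inductive ActionUnit (At : Type u) : Type u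
  | addPriv (α : Lit At)  -- ⊕α
  | delPriv (α : Lit At)  -- ⊖α
  | addPub (α : Lit At)   -- ⊞α
  | delPub (α : Lit At)   -- ⊟α

/-- Action formulae: built from action units by conjunction and disjunction. -/
inductive AForm (At : Type u) : Type u
  | unit (u : ActionUnit At)
  | and (φ ψ : AForm At)
  | or (φ ψ : AForm At)

/-- A set of action units satisfies an action formula. -/
def AForm.sat {At : Type u} (A : Set (ActionUnit At)) : AForm At → Prop
  | .unit u => u ∈ A
  | .and φ ψ => φ.sat A ∧ ψ.sat A
  | .or φ ψ => φ.sat A ∨ ψ.sat A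

/-- `A` minimally satisfies `ψ`: it satisfies `ψ` and no proper subset does. -/
def MinSat {At : Type u} (A : Set (ActionUnit At)) (ψ : AForm At) : Prop :=
  ψ.sat A ∧ ∀ B : Set (ActionUnit At), B ⊂ A → ¬ ψ.sat B

/-- An action rule φ ⇒ ψ. -/
structure ActionRule (At : Type u) : Type u where
  cond : PForm At
  head : AForm At

/-- An execution state (s1, a1, p, a2, s2). -/
abbrev ExecState (At : Type u) : Type u :=
  Set (Lit At) × Set (ActionUnit At) × Set (Lit At) × Set (ActionUnit At) × Set (Lit At)

/-- An execution e = (s1, a1, p, a2, s2, t), with a1(0) = a2(0) = ∅. -/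
structure Execution (At : Type u) : Type u where
  s1 : ℕ → Set (Lit At)
  a1 : ℕ → Set (ActionUnit At)
  p : ℕ → Set (Lit At)
  a2 : ℕ → Set (ActionUnit At)
  s2 : ℕ → Set (Lit At)
  t : ℕ∞
  a1_zero : a1 0 = ∅
  a2_zero : a2 0 = ∅

/-- a(n) = a1(n) ∪ a2(n). -/
def Execution.a {At : Type u} (e : Execution At) (n : ℕ) : Set (ActionUnit At) :=
  e.a1 n ∪ e.a2 n

/-- e(n) = (s1(n), a1(n), p(n), a2(n), s2(n)). -/
def Execution.state {At : Type u} (e : Execution At) (n : ℕ) : ExecState At :=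
  (e.s1 n, e.a1 n, e.p n, e.a2 n, e.s2 n)

/-- The execution is propagated. -/
def Execution.Propagated {At : Type u} (e : Execution At) : Prop :=
  ∀ n : ℕ, (n : ℕ∞) < e.t →
    e.s1 (n+1) = (e.s1 n \ {α | ActionUnit.delPriv α ∈ e.a1 n}) ∪
        {α | ActionUnit.addPriv α ∈ e.a1 n} ∧
    e.s2 (n+1) = (e.s2 n \ {α | ActionUnit.delPriv α ∈ e.a2 n}) ∪
        {α | ActionUnit.addPriv α ∈ e.a2 n} ∧
    e.p (n+1) = (e.p n \ {α | ActionUnit.delPub α ∈ e.a n}) ∪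
        {α | ActionUnit.addPub α ∈ e.a n}

/-- The execution is finitely engaged. -/
def Execution.FinitelyEngaged {At : Type u} (e : Execution At) : Prop :=
  ∃ T : ℕ, e.t = (T : ℕ∞) ∧
    (∀ n : ℕ, 1 ≤ n → n ≤ T - 2 → e.a n = ∅ → e.a (n+1) ≠ ∅) ∧
    e.a (T - 1) = ∅ ∧ e.a T = ∅

/-- The execution is infinitely engaged. -/
def Execution.InfinitelyEngaged {At : Type u} (e : Execution At) : Prop :=
  e.t = ⊤ ∧ ∀ n : ℕ, e.a n = ∅ → e.a (n+1) ≠ ∅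

/-- A system S = (Rules₁, Rules₂, Initials). -/
structure System (At : Type u) : Type u where
  rules1 : Set (ActionRule At)
  rules2 : Set (ActionRule At)
  initials : Set (ExecState At)

/-- The system S generates the execution e. -/
def System.Generates {At : Type u} (S : System At) (e : Execution At) : Prop :=
  e.Propagated ∧ (e.FinitelyEngaged ∨ e.InfinitelyEngaged) ∧
  e.state 0 ∈ S.initials ∧
  ∀ m : ℕ, 1 ≤ m → (m : ℕ∞) < e.t →
    (Odd m → e.a2 m = ∅ ∧ (e.a1 m = ∅ ∨ ∃ r ∈ S.rules1,
      Entails (e.s1 m ∪ e.p m) r.cond ∧ MinSat (e.a1 m) r.head)) ∧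
    (Even m → e.a1 m = ∅ ∧ (e.a2 m = ∅ ∨ ∃ r ∈ S.rules2,
      Entails (e.s2 m ∪ e.p m) r.cond ∧ MinSat (e.a2 m) r.head))

/-- A state of the finite state machine: (y, s1, p, s2). -/
abbrev FSMState (At : Type u) : Type u :=
  ℕ × Set (Lit At) × Set (Lit At) × Set (Lit At)

/-- A letter of the alphabet: a pair (a1, a2) of sets of action units. -/
abbrev FSMLabel (At : Type u) : Type u :=
  Set (ActionUnit At) × Set (ActionUnit At)

/-- A finite state machine M = (States, Trans, Start, Term, Alphabet). -/
structure FSM (At : Type u) : Type u where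
  States : Set (FSMState At)
  Trans : Set (FSMState At × FSMLabel At × FSMState At)
  Start : FSMState At
  Term : Set (FSMState At)
  Alphabet : Set (FSMLabel At)

/-- The first component of a machine state for time `n` in an execution with
terminal time `t`: 0 if n = t, 1 if n < t and n odd, 2 if n < t and n even. -/
noncomputable def ylabel (t : ℕ∞) (n : ℕ) : ℕ :=
  if (n : ℕ∞) = t then 0 else if Odd n then 1 else 2

/-- The machine state corresponding to step `n` of an execution. -/
noncomputable def Execution.fsmState {At : Type u} (e : Execution At) (n : ℕ) : FSMState At :=
  (ylabel e.t n, e.s1 n, e.p n, e.s2 n)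

/-- First component of the target of a transition leaving step `n`:
0 if n+1 = t, otherwise 1 if n is odd and 2 if n is even. -/
noncomputable def ytrans (t : ℕ∞) (n : ℕ) : ℕ :=
  if ((n : ℕ∞) + 1) = t then 0 else if Odd n then 1 else 2

/-- M represents the system S for the initial state I. -/
noncomputable def Represents {At : Type u} (M : FSM At) (S : System At) (I : ExecState At) : Prop :=
  M.States = {σ | ∃ e : Execution At, S.Generates e ∧ e.state 0 = I ∧
      ∃ n : ℕ, (n : ℕ∞) ≤ e.t ∧ σ = e.fsmState n} ∧
  M.Term = {σ ∈ M.States | σ.1 = 0} ∧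
  M.Alphabet = {τ | ∃ e : Execution At, S.Generates e ∧ e.state 0 = I ∧
      ∃ n : ℕ, (n : ℕ∞) ≤ e.t ∧ τ = (e.a1 n, e.a2 n)} ∧
  M.Start = (1, I.1, I.2.2.1, I.2.2.2.2) ∧
  M.Trans = {tr | ∃ e : Execution At, S.Generates e ∧ e.state 0 = I ∧
      ∃ n : ℕ, (n : ℕ∞) < e.t ∧
        tr = (((if Odd n then 1 else 2 : ℕ), e.s1 n, e.p n, e.s2 n),
              (e.a1 n, e.a2 n),
              (ytrans e.t n, e.s1 (n+1), e.p (n+1), e.s2 (n+1)))}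

/-- The action units occurring in an action formula. -/
def AForm.units {At : Type u} : AForm At → Set (ActionUnit At)
  | .unit u => {u}
  | .and φ ψ => φ.units ∪ ψ.units
  | .or φ ψ => φ.units ∪ ψ.units

theorem AForm.sat_inter_units {At : Type u} (A U : Set (ActionUnit At)) (ψ : AForm At)
    (hU : ψ.units ⊆ U) (h : ψ.sat A) : ψ.sat (A ∩ U) := by
  induction ψ with
  | unit u => exact ⟨h, hU rfl⟩
  | and φ ψ ih1 ih2 =>
    exact ⟨ih1 (fun x hx => hU (Or.inl hx)) h.1, ih2 (fun x hx => hU (Or.inr hx)) h.2⟩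
  | or φ ψ ih1 ih2 =>
    rcases h with h | h
    · exact Or.inl (ih1 (fun x hx => hU (Or.inl hx)) h)
    · exact Or.inr (ih2 (fun x hx => hU (Or.inr hx)) h)

theorem MinSat.subset_units {At : Type u} {A : Set (ActionUnit At)} {ψ : AForm At}
    (h : MinSat A ψ) : A ⊆ ψ.units := by
  by_contra hn
  refine h.2 (A ∩ ψ.units) ⟨Set.inter_subset_left, fun hs => hn fun x hx => (hs hx).2⟩ ?_
  exact AForm.sat_inter_units A _ ψ (fun _ hx => hx) h.1

theorem AForm.units_finite {At : Type u} (ψ : AForm At) : ψ.units.Finite := by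
  induction ψ with
  | unit u => exact Set.finite_singleton u
  | and φ ψ ih1 ih2 => exact ih1.union ih2
  | or φ ψ ih1 ih2 => exact ih1.union ih2

/-- Every action unit performed before the end occurs in the head of a rule. -/
theorem System.Generates.mem_units {At : Type u} {S : System At} {e : Execution At}
    (h : S.Generates e) (n : ℕ) (hn : (n : ℕ∞) < e.t) (x : ActionUnit At)
    (hx : x ∈ e.a1 n ∨ x ∈ e.a2 n) : ∃ r ∈ S.rules1 ∪ S.rules2, x ∈ r.head.units := by
  rcases Nat.eq_zero_or_pos n with rfl | hpos
  · simp [e.a1_zero, e.a2_zero] at hx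
  · obtain ⟨ho, he⟩ := h.2.2.2 n hpos hn
    rcases Nat.even_or_odd n with hp | hp
    · obtain ⟨h1, h2⟩ := he hp
      rcases hx with hx | hx
      · simp [h1] at hx
      · rcases h2 with h2 | ⟨r, hr, -, hm⟩
        · simp [h2] at hx
        · exact ⟨r, Or.inr hr, hm.subset_units hx⟩
    · obtain ⟨h1, h2⟩ := ho hp
      rcases hx with hx | hx
      · rcases h2 with h2 | ⟨r, hr, -, hm⟩
        · simp [h2] at hx
        · exact ⟨r, Or.inl hr, hm.subset_units hx⟩
      · simp [h1] at hx

/-- finiteness of the representing machine. If the rule sets are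
finite and the initial state has finite components, then every literal occurring
in a private or public state of any generated execution lies in the finite set
consisting of the initial literals together with the literals added (⊕ or ⊞) in
the head of some rule; consequently the state set of the representing machine is
finite. -/
theorem representing_machine_finite {At : Type u} (S : System At)
    (h1 : S.rules1.Finite) (h2 : S.rules2.Finite)
    (s10 p0 s20 : Set (Lit At))
    (hs1 : s10.Finite) (hp0 : p0.Finite) (hs2 : s20.Finite)
    (hI : ((s10, (∅ : Set (ActionUnit At)), p0, (∅ : Set (ActionUnit At)), s20) :
        ExecState At) ∈ S.initials) :
    (s10 ∪ p0 ∪ s20 ∪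
      {α : Lit At | ∃ r ∈ S.rules1 ∪ S.rules2,
        ActionUnit.addPriv α ∈ r.head.units ∨ ActionUnit.addPub α ∈ r.head.units}).Finite ∧
    (∀ e : Execution At, S.Generates e →
      e.state 0 = (s10, (∅ : Set (ActionUnit At)), p0, (∅ : Set (ActionUnit At)), s20) →
      ∀ n : ℕ, (n : ℕ∞) ≤ e.t →
        e.s1 n ∪ e.p n ∪ e.s2 n ⊆
          s10 ∪ p0 ∪ s20 ∪
            {α : Lit At | ∃ r ∈ S.rules1 ∪ S.rules2,
              ActionUnit.addPriv α ∈ r.head.units ∨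
                ActionUnit.addPub α ∈ r.head.units}) ∧
    Set.Finite {σ : FSMState At | ∃ e : Execution At, S.Generates e ∧
      e.state 0 = (s10, (∅ : Set (ActionUnit At)), p0, (∅ : Set (ActionUnit At)), s20) ∧
      ∃ n : ℕ, (n : ℕ∞) ≤ e.t ∧ σ = e.fsmState n} := by
  have hfin : (s10 ∪ p0 ∪ s20 ∪
      {α : Lit At | ∃ r ∈ S.rules1 ∪ S.rules2,
        ActionUnit.addPriv α ∈ r.head.units ∨ ActionUnit.addPub α ∈ r.head.units}).Finite := by
    refine ((hs1.union hp0).union hs2).union ?_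
    have hU : (⋃ r ∈ S.rules1 ∪ S.rules2, r.head.units).Finite :=
      (h1.union h2).biUnion fun r _ => r.head.units_finite
    have ha := hU.preimage (f := ActionUnit.addPriv)
      (fun a _ b _ hab => by injection hab)
    have hb := hU.preimage (f := ActionUnit.addPub)
      (fun a _ b _ hab => by injection hab)
    refine (ha.union hb).subset ?_
    rintro α ⟨r, hr, h | h⟩
    · exact Or.inl (Set.mem_biUnion hr h)
    · exact Or.inr (Set.mem_biUnion hr h)
  have hsub : ∀ e : Execution At, S.Generates e →
      e.state 0 = (s10, (∅ : Set (ActionUnit At)), p0, (∅ : Set (ActionUnit At)), s20) →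
      ∀ n : ℕ, (n : ℕ∞) ≤ e.t →
        e.s1 n ∪ e.p n ∪ e.s2 n ⊆
          s10 ∪ p0 ∪ s20 ∪
            {α : Lit At | ∃ r ∈ S.rules1 ∪ S.rules2,
              ActionUnit.addPriv α ∈ r.head.units ∨
                ActionUnit.addPub α ∈ r.head.units} := by
    intro e he h0 n
    induction n with
    | zero =>
      intro _
      simp only [Execution.state, Prod.mk.injEq] at h0
      obtain ⟨e1, -, e2, -, e3⟩ := h0
      rw [e1, e2, e3]
      exact Set.subset_union_left
    | succ n ih =>
      intro hn
      have hlt : (n : ℕ∞) < e.t :=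
        lt_of_lt_of_le (by exact_mod_cast Nat.lt_succ_self n) hn
      have ih' := ih hlt.le
      have key := he.mem_units n hlt
      obtain ⟨q1, q2, q3⟩ := he.1 n hlt
      rw [q1, q2, q3]
      rintro α ((h | h) | h)
      · rcases h with h | h
        · exact ih' (Or.inl (Or.inl h.1))
        · obtain ⟨r, hr, hu⟩ := key _ (Or.inl h)
          exact Or.inr ⟨r, hr, Or.inl hu⟩
      · rcases h with h | h
        · exact ih' (Or.inl (Or.inr h.1))
        · obtain ⟨r, hr, hu⟩ := key _ h
          exact Or.inr ⟨r, hr, Or.inr hu⟩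
      · rcases h with h | h
        · exact ih' (Or.inr h.1)
        · obtain ⟨r, hr, hu⟩ := key _ (Or.inr h)
          exact Or.inr ⟨r, hr, Or.inl hu⟩
  refine ⟨hfin, hsub, ?_⟩
  have hP := hfin.finite_subsets
  refine ((Set.finite_Iic 2).prod (hP.prod (hP.prod hP))).subset ?_
  rintro σ ⟨e, he, h0, n, hn, rfl⟩
  have hs := hsub e he h0 n hn
  refine ⟨?_, fun x hx => hs (Or.inl (Or.inl hx)), fun x hx => hs (Or.inl (Or.inr hx)),
    fun x hx => hs (Or.inr hx)⟩
  simp only [Execution.fsmState, ylabel, Set.mem_Iic]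
  split_ifs <;> omega
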